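/- Let C be a nonempty finite set and let P₁, …, P_B (B ≥ 1) be probability mass functions on C that are strictly positive (P_i(c) > 0 for all i and all c ∈ C). Define the average distribution M by M(c) = (1/B) ∑_{i=1}^{B} P_i(c), the K-uncertainty δ_K = ∑_{1 ≤ i < j ≤ B} [D_KL(P_i ‖ P_j) + D_KL(P_j ‖ P_i)], and the uncertainty δ_v = (1/B) ∑_{i=1}^{B} D_KL(P_i ‖ M). Then δ_K ≥ B · δ_v. -/

import Mathlib

lemma kl_nonneg_aux {C : Type*} [Fintype C] (p q : C → ℝ) (hp : ∀ c, 0 < p c)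
    (hq : ∀ c, 0 < q c) (hps : ∑ c, p c = 1) (hqs : ∑ c, q c = 1) :
    0 ≤ ∑ c, p c * Real.log (p c / q c) := by
  have h : ∑ c, (p c - q c) ≤ ∑ c, p c * Real.log (p c / q c) := by
    refine Finset.sum_le_sum fun c _ => ?_
    have h1 := Real.one_sub_inv_le_log_of_pos (div_pos (hp c) (hq c))
    have h2 := mul_le_mul_of_nonneg_left h1 (hp c).le
    have h3 : p c * (1 - (p c / q c)⁻¹) = p c - q c := by
      have := (hp c).ne'
      have := (hq c).ne'
      field_simp
    linarith
  rw [Finset.sum_sub_distrib, hps, hqs] at h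
  linarith

lemma log_mean_aux (B : ℕ) (hB : 1 ≤ B) (x : Fin B → ℝ) (hx : ∀ i, 0 < x i) :
    (1 / (B : ℝ)) * ∑ i, Real.log (x i) ≤ Real.log ((1 / (B : ℝ)) * ∑ i, x i) := by
  have hB' : (0 : ℝ) < B := by exact_mod_cast hB
  have h := strictConcaveOn_log_Ioi.concaveOn.le_map_sum (t := Finset.univ)
    (w := fun _ : Fin B => 1 / (B : ℝ)) (p := x) (fun _ _ => by positivity)
    (by simp [hB'.ne']) (fun i _ => hx i)
  simpa [Finset.mul_sum] using h

/-- For strictly positive pmfs `P 1, …, P B` on a nonempty finite set `C`,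
with `M` the average distribution, `δ_K = ∑_{i<j} [D_KL(P i ‖ P j) + D_KL(P j ‖ P i)]`
and `δ_v = (1/B) ∑ i, D_KL(P i ‖ M)`, we have `δ_K ≥ B · δ_v`. -/
theorem stmt_0 {C : Type*} [Fintype C] [Nonempty C] (B : ℕ) (hB : 1 ≤ B)
    (P : Fin B → C → ℝ)
    (hpos : ∀ i c, 0 < P i c)
    (hsum : ∀ i, ∑ c, P i c = 1) :
    (∑ i : Fin B, ∑ j ∈ Finset.Ioi i,
        ((∑ c, P i c * Real.log (P i c / P j c)) +
         (∑ c, P j c * Real.log (P j c / P i c))))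
      ≥ (B : ℝ) *
        ((1 / (B : ℝ)) * ∑ i : Fin B,
          ∑ c, P i c * Real.log (P i c / ((1 / (B : ℝ)) * ∑ k : Fin B, P k c))) := by
  have hB' : (0 : ℝ) < B := by exact_mod_cast hB
  have hB1 : (1 : ℝ) ≤ B := by exact_mod_cast hB
  have hne : Nonempty (Fin B) := ⟨⟨0, hB⟩⟩
  rw [← mul_assoc, mul_one_div_cancel hB'.ne', one_mul]
  have e := Finset.sum_sum_Ioi_add_eq_sum_sum_off_diag
    (fun j i : Fin B => ∑ c, P i c * Real.log (P i c / P j c))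
  rw [e]
  refine Finset.sum_le_sum fun i _ => ?_
  have hfull : ∑ j ∈ {i}ᶜ, ∑ c, P i c * Real.log (P i c / P j c)
      = ∑ j, ∑ c, P i c * Real.log (P i c / P j c) := by
    rw [← Finset.sum_compl_add_sum {i}]
    simp [div_self (hpos i _).ne']
  rw [hfull]
  have hnn : 0 ≤ ∑ j, ∑ c, P i c * Real.log (P i c / P j c) :=
    Finset.sum_nonneg fun j _ =>
      kl_nonneg_aux _ _ (hpos i) (hpos j) (hsum i) (hsum j)
  have h1 : 1 / (B : ℝ) ≤ 1 := by rw [div_le_one hB']; exact hB1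
  refine le_trans ?_ (mul_le_of_le_one_left hnn h1)
  rw [Finset.sum_comm, Finset.mul_sum]
  refine Finset.sum_le_sum fun c _ => ?_
  have hM : 0 < (1 / (B : ℝ)) * ∑ k : Fin B, P k c :=
    mul_pos (by positivity) (Finset.sum_pos (fun k _ => hpos k c) Finset.univ_nonempty)
  have hl := log_mean_aux B hB (fun k => P k c) (fun k => hpos k c)
  rw [Real.log_div (hpos i c).ne' hM.ne', ← Finset.mul_sum]
  have h2 : ∑ j, Real.log (P i c / P j c) = B * Real.log (P i c) - ∑ j, Real.log (P j c) := by
    simp_rw [fun j => Real.log_div (hpos i c).ne' (hpos j c).ne']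
    simp
  rw [h2]
  have h3 : 1 / (B : ℝ) * (P i c * (B * Real.log (P i c) - ∑ j, Real.log (P j c)))
      = P i c * (Real.log (P i c) - 1 / (B : ℝ) * ∑ j, Real.log (P j c)) := by
    field_simp
  rw [h3]
  exact mul_le_mul_of_nonneg_left (by linarith) (hpos i c).le
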